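/- Let X be a reflexive Banach space over 𝕂 (𝕂 = ℝ or ℂ), let Y be a Banach space, and let T, A : X → Y be compact linear operators. Then T ⊥_B A (with respect to the operator norm) if and only if 0 ∈ conv{ y*(Ax) : x is an extreme point of the closed unit ball of X, y* is an extreme point of the closed unit ball of Y*, y*(Tx) = ‖T‖ }. -/

import Mathlib

open Filter Topology Metric

/-- The set of convex combinations of at most `finrank ℝ E + 1` points of a compact set is compact,
so by Carathéodory's theorem the convex hull of the set is compact. -/
theorem IsCompact.convexHull_of_finiteDimensional {E : Type*} [NormedAddCommGroup E]
    [NormedSpace ℝ E] [FiniteDimensional ℝ E] {s : Set E} (hs : IsCompact s) :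
    IsCompact (convexHull ℝ s) := by
  classical
  have join_compact {a b : Set E} (ha : IsCompact a) (hb : IsCompact b) :
      IsCompact (convexJoin ℝ a b) := by
    have := ((isCompact_Icc (a := (0 : ℝ)) (b := 1)).prod (ha.prod hb)).image
      (f := fun p : ℝ × E × E => (1 - p.1) • p.2.1 + p.1 • p.2.2) (by fun_prop)
    convert this using 1
    ext x
    simp only [mem_convexJoin, segment_eq_image, Set.mem_image, Set.mem_prod, Prod.exists]
    grind
  have exists_compact (n : ℕ) : ∃ c : Set E, IsCompact c ∧ c ⊆ convexHull ℝ s ∧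
      ∀ t : Finset E, ↑t ⊆ s → t.card ≤ n + 1 → convexHull ℝ (t : Set E) ⊆ c := by
    induction n with
    | zero =>
      refine ⟨s, hs, subset_convexHull ℝ s, fun t hts ht => ?_⟩
      have : (t : Set E).Subsingleton := by
        intro x hx y hy
        exact Finset.card_le_one.1 ht x hx y hy
      rwa [(this.convex).convexHull_eq]
    | succ n ih =>
      obtain ⟨c, hc, hcs, h⟩ := ih
      refine ⟨convexJoin ℝ s c ∪ c, (join_compact hs hc).union hc,
        Set.union_subset (convexJoin_subset (subset_convexHull ℝ s) hcs (convex_convexHull ℝ s))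
          hcs, fun t hts ht => ?_⟩
      by_cases hcard : t.card ≤ n + 1
      · exact (h t hts hcard).trans Set.subset_union_right
      obtain ⟨x, hx⟩ : t.Nonempty := Finset.card_pos.1 (by omega)
      have hcard' : (t.erase x).card = n + 1 := by rw [Finset.card_erase_of_mem hx]; omega
      have hne : (t.erase x : Set E).Nonempty :=
        Finset.coe_nonempty.2 (Finset.card_pos.1 (by omega))
      rw [← Finset.insert_erase hx, Finset.coe_insert, convexHull_insert hne]
      refine (convexJoin_mono (Set.singleton_subset_iff.2 (hts hx))
        (h _ ?_ hcard'.le)).trans Set.subset_union_left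
      exact (Finset.coe_subset.2 (Finset.erase_subset x t)).trans hts
  obtain ⟨c, hc, hcs, h⟩ := exists_compact (Module.finrank ℝ E)
  convert hc
  refine Set.Subset.antisymm ?_ hcs
  rw [convexHull_eq_union]
  refine Set.iUnion_subset fun t => Set.iUnion_subset fun hts => Set.iUnion_subset fun ht => ?_
  refine h t hts ?_
  have := ht.card_le_finrank_succ
  rw [Fintype.card_coe] at this
  exact this.trans (by gcongr; exact Submodule.finrank_le _)

/-- An injective affine map sends extreme points to extreme points of the image. -/
theorem image_extremePoints_of_injective {E F : Type*} [AddCommGroup E] [Module ℝ E]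
    [AddCommGroup F] [Module ℝ F] (f : E →ᵃ[ℝ] F) (hf : Function.Injective f) (s : Set E) :
    f '' s.extremePoints ℝ = (f '' s).extremePoints ℝ := by
  have key {x : E} : f x ∈ (f '' s).extremePoints ℝ ↔ x ∈ s.extremePoints ℝ := by
    simp only [mem_extremePoints_iff_left, Set.forall_mem_image, ← image_openSegment,
      hf.mem_set_image, hf.eq_iff]
  ext y
  constructor
  · rintro ⟨x, hx, rfl⟩
    exact key.2 hx
  · intro hy
    obtain ⟨x, -, rfl⟩ := hy.1
    exact ⟨x, key.1 hy, rfl⟩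

/-- The points of `s` at which a linear functional attains an upper bound form an extreme subset. -/
theorem isExtreme_setOf_eq_of_le {E : Type*} [AddCommGroup E] [Module ℝ E] {s : Set E}
    (g : E →ₗ[ℝ] ℝ) {c : ℝ} (hg : ∀ x ∈ s, g x ≤ c) : IsExtreme ℝ s {x ∈ s | g x = c} := by
  refine ⟨fun x hx => hx.1, ?_⟩
  rintro x hx y hy z ⟨-, hz⟩ ⟨a, b, ha, hb, hab, rfl⟩
  refine ⟨hx, (hg x hx).antisymm ?_⟩
  simp only [map_add, map_smul, smul_eq_mul] at hz
  have := hg y hy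
  by_contra! hlt
  have hlt' : a * g x + b * g y < a * c + b * c :=
    add_lt_add_of_lt_of_le (mul_lt_mul_of_pos_left hlt ha) (mul_le_mul_of_nonneg_left this hb.le)
  rw [hz, ← add_mul, hab, one_mul] at hlt'
  exact hlt'.false

/-- In finite dimension, a nonzero functional weakly separates a convex set from any point of its
closure that does not belong to it. -/
theorem Convex.exists_ne_zero_le_of_notMem {E : Type*} [NormedAddCommGroup E]
    [NormedSpace ℝ E] [FiniteDimensional ℝ E] {s : Set E} (hs : Convex ℝ s) {p : E}
    (hp : p ∉ s) (hp' : p ∈ closure s) :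
    ∃ f : E →L[ℝ] ℝ, f ≠ 0 ∧ ∀ x ∈ s, f x ≤ f p := by
  by_cases hint : (interior s).Nonempty
  · exact geometric_hahn_banach_of_nonempty_interior_point hs (fun h => hp (interior_subset h)) hint
  rw [hs.interior_nonempty_iff_affineSpan_eq_top] at hint
  obtain ⟨q, hq⟩ : s.Nonempty := closure_nonempty_iff.1 ⟨p, hp'⟩
  have hdir : (affineSpan ℝ s).direction < ⊤ := by
    rw [lt_top_iff_ne_top, Ne,
      AffineSubspace.direction_eq_top_iff_of_nonempty ⟨q, subset_affineSpan ℝ s hq⟩]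
    exact hint
  obtain ⟨f, hf, hfs⟩ := Submodule.exists_le_ker_of_lt_top _ hdir
  have hconst : ∀ x ∈ s, f x = f q := fun x hx => by
    have := hfs (AffineSubspace.vsub_mem_direction (subset_affineSpan ℝ s hx)
      (subset_affineSpan ℝ s hq))
    simpa [sub_eq_zero] using this
  refine ⟨f.toContinuousLinearMap, by simpa using hf, fun x hx => ?_⟩
  have hpq : f p = f q :=
    closure_minimal (t := {x | f x = f q}) hconst
      (isClosed_eq f.continuous_of_finiteDimensional continuous_const) hp'
  simp [hpq, hconst x hx]

/-- **Minkowski's theorem**: in finite dimension a compact convex set is contained in the convex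
hull of its extreme points. -/
theorem IsCompact.subset_convexHull_extremePoints {E : Type*} [NormedAddCommGroup E]
    [NormedSpace ℝ E] [FiniteDimensional ℝ E] {s : Set E} (hs : IsCompact s) (hc : Convex ℝ s) :
    s ⊆ convexHull ℝ (s.extremePoints ℝ) := by
  induction hn : Module.finrank ℝ E using Nat.strong_induction_on generalizing E with
  | _ n ih =>
  intro p hp
  by_contra hps
  have hcl := closure_convexHull_extremePoints hs hc
  obtain ⟨f, hf, hle⟩ := (convex_convexHull ℝ _).exists_ne_zero_le_of_notMem hps
    (hcl.ge hp)
  have hle' : ∀ x ∈ s, f x ≤ f p := by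
    rw [← hcl]
    exact closure_minimal hle (isClosed_le f.continuous continuous_const)
  let j : f.ker →ᵃ[ℝ] E :=
    (f.ker.subtype.toAffineMap) + AffineMap.const ℝ f.ker p
  have hj : ∀ v, j v = v + p := fun v => rfl
  have hjs : j '' (j ⁻¹' s) = {x ∈ s | f x = f p} := by
    ext x
    constructor
    · rintro ⟨v, hv, rfl⟩
      exact ⟨hv, by rw [hj, map_add, show f v = 0 from v.2, zero_add]⟩
    · rintro ⟨hx, hfx⟩
      have : j ⟨x - p, by simp [hfx]⟩ = x := by simp [hj]
      exact ⟨_, by rwa [Set.mem_preimage, this], this⟩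
  have hemb : IsClosedEmbedding j :=
    (Homeomorph.addRight p).isClosedEmbedding.comp f.isClosed_ker.isClosedEmbedding_subtypeVal
  have hext : j '' ((j ⁻¹' s).extremePoints ℝ) ⊆ s.extremePoints ℝ := by
    rw [image_extremePoints_of_injective j hemb.injective, hjs]
    exact (isExtreme_setOf_eq_of_le f.toLinearMap hle').extremePoints_subset_extremePoints
  have hlt : Module.finrank ℝ f.ker < n := by
    rw [← hn]
    refine Submodule.finrank_lt fun h => hf ?_
    ext x
    exact LinearMap.mem_ker.1 (h ▸ Submodule.mem_top : x ∈ f.ker)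
  have h0 : (0 : f.ker) ∈ j ⁻¹' s := by simpa [hj] using hp
  have := Set.mem_image_of_mem j
    (ih _ hlt (hemb.isCompact_preimage hs) (hc.affine_preimage j) rfl h0)
  rw [AffineMap.image_convexHull, hj, Submodule.coe_zero, zero_add] at this
  exact hps (convexHull_mono hext this)

/-- A continuous linear image of a point in a face of a compact convex set is a convex combination
of images of extreme points in that face, when the target is finite dimensional. -/
theorem IsCompact.map_mem_convexHull_image_extremePoints {V E : Type*} [AddCommGroup V]
    [Module ℝ V] [TopologicalSpace V] [T2Space V] [IsTopologicalAddGroup V] [ContinuousSMul ℝ V]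
    [LocallyConvexSpace ℝ V] [NormedAddCommGroup E] [NormedSpace ℝ E] [FiniteDimensional ℝ E]
    {s : Set V} (hs : IsCompact s) (hc : Convex ℝ s) (f : V →L[ℝ] E) (g : V →L[ℝ] ℝ) {c : ℝ}
    (hg : ∀ x ∈ s, g x ≤ c) {x : V} (hx : x ∈ s) (hgx : g x = c) :
    f x ∈ convexHull ℝ (f '' {z ∈ s.extremePoints ℝ | g z = c}) := by
  have hF : IsCompact {x ∈ s | g x = c} :=
    hs.inter_right (isClosed_eq g.continuous continuous_const)
  have hFc : Convex ℝ {x ∈ s | g x = c} := hc.inter (convex_hyperplane g.toLinearMap.isLinear c)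
  have hmem := (hF.image f.continuous).subset_convexHull_extremePoints
    (hFc.linear_image f.toLinearMap) (Set.mem_image_of_mem f ⟨hx, hgx⟩)
  refine convexHull_mono ?_ hmem
  intro w hw
  obtain ⟨z, hz, rfl⟩ := surjOn_extremePoints_image f.toContinuousAffineMap hF hw
  exact ⟨z, ⟨(isExtreme_setOf_eq_of_le g.toLinearMap hg).extremePoints_subset_extremePoints hz,
    hz.1.2⟩, rfl⟩

/-- If the real part of the evaluation at `w₁` attains an upper bound on the dual unit ball at `y`,
then the value of `y` at `w₂` is a convex combination of values of extreme points of the dual unit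
ball at which the upper bound is attained. -/
theorem apply_mem_convexHull_extremePoints_dual {𝕜 W : Type*} [RCLike 𝕜] [NormedAddCommGroup W]
    [NormedSpace 𝕜 W] (w₁ w₂ : W) {c : ℝ}
    (hc : ∀ z ∈ closedBall (0 : W →L[𝕜] 𝕜) 1, RCLike.re (z w₁) ≤ c) {y : W →L[𝕜] 𝕜}
    (hy : y ∈ closedBall (0 : W →L[𝕜] 𝕜) 1) (hyc : RCLike.re (y w₁) = c) :
    y w₂ ∈ convexHull ℝ {α : 𝕜 | ∃ z ∈ Set.extremePoints ℝ (closedBall (0 : W →L[𝕜] 𝕜) 1),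
      RCLike.re (z w₁) = c ∧ z w₂ = α} := by
  let e : (W →L[𝕜] 𝕜) →ₗ[ℝ] (W → 𝕜) :=
    { toFun := fun z => z, map_add' := fun _ _ => rfl, map_smul' := fun _ _ => rfl }
  have hcomp : IsCompact (e '' closedBall 0 1) := by
    have := (WeakDual.isCompact_closedBall (𝕜 := 𝕜) (0 : W →L[𝕜] 𝕜) 1).image
      WeakDual.coeFn_continuous
    exact this
  have hle : ∀ z ∈ e '' closedBall 0 1,
      (RCLike.reCLM.comp (ContinuousLinearMap.proj (R := ℝ) w₁)) z ≤ c := by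
    rintro _ ⟨z, hz, rfl⟩
    exact hc z hz
  have hmem := hcomp.map_mem_convexHull_image_extremePoints
    ((convex_closedBall 0 1).linear_image e) (ContinuousLinearMap.proj (R := ℝ) w₂) _ hle
    (Set.mem_image_of_mem e hy) hyc
  have hext := image_extremePoints_of_injective e.toAffineMap DFunLike.coe_injective
    (closedBall (0 : W →L[𝕜] 𝕜) 1)
  rw [LinearMap.coe_toAffineMap] at hext
  rw [← hext] at hmem
  refine convexHull_mono ?_ hmem
  rintro _ ⟨_, ⟨⟨z, hz, rfl⟩, hzc⟩, rfl⟩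
  exact ⟨z, hz, hzc, rfl⟩

/-- The analogue of `apply_mem_convexHull_extremePoints_dual` for the unit ball of a reflexive
space. -/
theorem apply_mem_convexHull_extremePoints_of_reflexive {𝕜 X : Type*} [RCLike 𝕜]
    [NormedAddCommGroup X] [NormedSpace 𝕜 X] [NormedSpace ℝ X] [IsScalarTower ℝ 𝕜 X]
    (hrefl : Function.Surjective (NormedSpace.inclusionInDoubleDual 𝕜 X)) (f g : X →L[𝕜] 𝕜)
    {c : ℝ} (hc : ∀ z ∈ closedBall (0 : X) 1, RCLike.re (f z) ≤ c) {x : X}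
    (hx : x ∈ closedBall (0 : X) 1) (hxc : RCLike.re (f x) = c) :
    g x ∈ convexHull ℝ {α : 𝕜 | ∃ z ∈ Set.extremePoints ℝ (closedBall (0 : X) 1),
      RCLike.re (f z) = c ∧ g z = α} := by
  let J : X ≃ₗᵢ[𝕜] ((X →L[𝕜] 𝕜) →L[𝕜] 𝕜) :=
    LinearIsometryEquiv.ofSurjective (NormedSpace.inclusionInDoubleDualLi 𝕜) hrefl
  have hball : J '' closedBall (0 : X) 1 = closedBall 0 1 := by
    rw [J.image_closedBall, J.map_zero]
  have hext : J '' (Set.extremePoints ℝ (closedBall (0 : X) 1)) =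
      Set.extremePoints ℝ (closedBall 0 1) := by
    rw [← hball]
    exact image_extremePoints (J.toLinearEquiv.restrictScalars ℝ) _
  have := apply_mem_convexHull_extremePoints_dual f g (c := c) (y := J x)
    (by rw [← hball]; rintro _ ⟨z, hz, rfl⟩; exact hc z hz)
    (hball ▸ Set.mem_image_of_mem J hx) hxc
  refine convexHull_mono ?_ this
  rw [← hext]
  rintro _ ⟨_, ⟨z, hz, rfl⟩, hzc, rfl⟩
  exact ⟨z, hz, hzc, rfl⟩

/-- Weak-star compactness of the dual unit ball, in terms of ultrafilters. -/
theorem exists_tendsto_apply_of_mem_closedBall_dual {𝕜 W ι : Type*} [RCLike 𝕜]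
    [NormedAddCommGroup W] [NormedSpace 𝕜 W] (l : Ultrafilter ι) {y : ι → W →L[𝕜] 𝕜}
    (hy : ∀ i, y i ∈ closedBall (0 : W →L[𝕜] 𝕜) 1) :
    ∃ z ∈ closedBall (0 : W →L[𝕜] 𝕜) 1, ∀ w, Tendsto (fun i => y i w) l (𝓝 (z w)) := by
  let y' : ι → WeakDual 𝕜 W := fun i => StrongDual.toWeakDual (y i)
  obtain ⟨z, hz, hlz⟩ := (WeakDual.isCompact_closedBall (𝕜 := 𝕜) (0 : W →L[𝕜] 𝕜) 1)
    |>.ultrafilter_le_nhds' (l.map y') (Filter.Eventually.of_forall (f := (l : Filter ι)) hy)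
  exact ⟨WeakDual.toStrongDual z, hz, fun w =>
    ((WeakDual.eval_continuous w).tendsto z).comp (show Tendsto y' l (𝓝 z) from hlz)⟩

/-- In a reflexive space, bounded families converge along ultrafilters in such a way that all
compact operators turn this into norm convergence. -/
theorem exists_tendsto_compactOperator_of_reflexive {𝕜 X Y ι : Type*} [RCLike 𝕜]
    [NormedAddCommGroup X] [NormedSpace 𝕜 X] [NormedAddCommGroup Y] [NormedSpace 𝕜 Y]
    (hrefl : Function.Surjective (NormedSpace.inclusionInDoubleDual 𝕜 X)) (l : Ultrafilter ι)
    {x : ι → X} (hx : ∀ i, x i ∈ closedBall (0 : X) 1) :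
    ∃ z ∈ closedBall (0 : X) 1, ∀ S : X →L[𝕜] Y, IsCompactOperator S →
      Tendsto (fun i => S (x i)) l (𝓝 (S z)) := by
  let J : X →ₗᵢ[𝕜] ((X →L[𝕜] 𝕜) →L[𝕜] 𝕜) := NormedSpace.inclusionInDoubleDualLi 𝕜
  have hJball (x : X) : J x ∈ closedBall (0 : (X →L[𝕜] 𝕜) →L[𝕜] 𝕜) 1 ↔ x ∈ closedBall (0 : X) 1 := by
    rw [mem_closedBall_zero_iff, ← J.norm_map x]
    exact mem_closedBall_zero_iff (E := (X →L[𝕜] 𝕜) →L[𝕜] 𝕜)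
  obtain ⟨z', hz', hlz'⟩ := exists_tendsto_apply_of_mem_closedBall_dual l
    (y := fun i => J (x i)) (fun i => (hJball _).2 (hx i))
  obtain ⟨z, rfl⟩ : ∃ z, J z = z' := hrefl z'
  refine ⟨z, (hJball z).1 hz', fun S hS => ?_⟩
  obtain ⟨K, hK, hSK⟩ := hS.image_closedBall_subset_compact (f := S.toLinearMap) 1
  obtain ⟨u, -, hu⟩ := hK.ultrafilter_le_nhds' (l.map fun i => S (x i))
    (Filter.Eventually.of_forall (f := (l : Filter ι)) fun i => hSK ⟨x i, hx i, rfl⟩)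
  have hu' : Tendsto (fun i => S (x i)) l (𝓝 u) := hu
  have : u = S z := by
    refine (SeparatingDual.eq_iff_forall_dual_eq (R := 𝕜)).2 fun f => ?_
    exact tendsto_nhds_unique ((f.continuous.tendsto u).comp hu') (hlz' (f.comp S))
  rwa [← this]

/-- Joint compactness of the pairing `(x, y) ↦ y (S x)` for compact operators `S`. -/
theorem exists_tendsto_apply_compactOperator_of_reflexive {𝕜 X Y ι : Type*} [RCLike 𝕜]
    [NormedAddCommGroup X] [NormedSpace 𝕜 X] [NormedAddCommGroup Y] [NormedSpace 𝕜 Y]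
    (hrefl : Function.Surjective (NormedSpace.inclusionInDoubleDual 𝕜 X)) (l : Ultrafilter ι)
    {x : ι → X} (hx : ∀ i, x i ∈ closedBall (0 : X) 1)
    {y : ι → Y →L[𝕜] 𝕜} (hy : ∀ i, y i ∈ closedBall (0 : Y →L[𝕜] 𝕜) 1) :
    ∃ a ∈ closedBall (0 : X) 1, ∃ b ∈ closedBall (0 : Y →L[𝕜] 𝕜) 1,
      ∀ S : X →L[𝕜] Y, IsCompactOperator S →
        Tendsto (fun i => y i (S (x i))) l (𝓝 (b (S a))) := by
  obtain ⟨a, ha, hla⟩ := exists_tendsto_compactOperator_of_reflexive (Y := Y) hrefl l hx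
  obtain ⟨b, hb, hlb⟩ := exists_tendsto_apply_of_mem_closedBall_dual l hy
  refine ⟨a, ha, b, hb, fun S hS => ?_⟩
  have hzero : Tendsto (fun i => y i (S (x i) - S a)) l (𝓝 0) := by
    refine squeeze_zero_norm (fun i => ?_) (tendsto_iff_norm_sub_tendsto_zero.1 (hla S hS))
    simpa using (y i).le_of_opNorm_le (mem_closedBall_zero_iff.1 (hy i)) (S (x i) - S a)
  simpa using hzero.add (hlb (S a))

/-- The values taken by `A` at the pairs in the unit balls where `T` takes the value `c` form a
compact set. -/
theorem isCompact_setOf_apply_of_norming {𝕜 X Y : Type*} [RCLike 𝕜]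
    [NormedAddCommGroup X] [NormedSpace 𝕜 X] [NormedAddCommGroup Y] [NormedSpace 𝕜 Y]
    (hrefl : Function.Surjective (NormedSpace.inclusionInDoubleDual 𝕜 X))
    {T A : X →L[𝕜] Y} (hT : IsCompactOperator T) (hA : IsCompactOperator A) (c : 𝕜) :
    IsCompact {α : 𝕜 | ∃ x ∈ closedBall (0 : X) 1, ∃ y ∈ closedBall (0 : Y →L[𝕜] 𝕜) 1,
      y (T x) = c ∧ y (A x) = α} := by
  set M := {α : 𝕜 | ∃ x ∈ closedBall (0 : X) 1, ∃ y ∈ closedBall (0 : Y →L[𝕜] 𝕜) 1,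
      y (T x) = c ∧ y (A x) = α}
  refine isCompact_iff_ultrafilter_le_nhds'.2 fun l hl => ?_
  have hchoice (α : 𝕜) : ∃ x ∈ closedBall (0 : X) 1, ∃ y ∈ closedBall (0 : Y →L[𝕜] 𝕜) 1,
      α ∈ M → y (T x) = c ∧ y (A x) = α := by
    by_cases hα : α ∈ M
    · obtain ⟨x, hx, y, hy, h⟩ := hα
      exact ⟨x, hx, y, hy, fun _ => h⟩
    · exact ⟨0, by simp, 0, by simp, fun h => (hα h).elim⟩
  choose x hx y hy hxy using hchoice
  obtain ⟨a, ha, b, hb, h⟩ := exists_tendsto_apply_compactOperator_of_reflexive hrefl l hx hy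
  have hTab : b (T a) = c := by
    refine tendsto_nhds_unique (h T hT) (tendsto_const_nhds.congr' ?_)
    filter_upwards [hl] with α hα using (hxy α hα).1.symm
  refine ⟨b (A a), ⟨a, ha, b, hb, hTab, rfl⟩, ?_⟩
  refine tendsto_id'.1 ((h A hA).congr' ?_)
  filter_upwards [hl] with α hα using (hxy α hα).2

/-- A scalar whose real part equals a bound on its norm is real. -/
theorem eq_ofReal_of_norm_le_of_re_eq {𝕜 : Type*} [RCLike 𝕜] {z : 𝕜} {r : ℝ} (hz : ‖z‖ ≤ r)
    (hre : RCLike.re z = r) : z = r := by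
  have h : RCLike.re z = ‖z‖ := le_antisymm (RCLike.re_le_norm z) (hre ▸ hz)
  rw [← RCLike.re_eq_self_of_le (h.ge), hre]

/-- Pairs in the two unit balls see at most the norm of an operator. -/
theorem norm_apply_apply_le_opNorm {𝕜 X Y : Type*} [RCLike 𝕜]
    [NormedAddCommGroup X] [NormedSpace 𝕜 X] [NormedAddCommGroup Y] [NormedSpace 𝕜 Y]
    (T : X →L[𝕜] Y) {x : X} (hx : x ∈ closedBall (0 : X) 1) {y : Y →L[𝕜] 𝕜}
    (hy : y ∈ closedBall (0 : Y →L[𝕜] 𝕜) 1) : ‖y (T x)‖ ≤ ‖T‖ :=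
  calc ‖y (T x)‖ ≤ 1 * ‖T x‖ := y.le_of_opNorm_le (mem_closedBall_zero_iff.1 hy) _
    _ = ‖T x‖ := one_mul _
    _ ≤ ‖T‖ := T.unit_le_opNorm x (mem_closedBall_zero_iff.1 hx)

/-- If `T` is Birkhoff-James orthogonal to `A`, then in every direction there is a pair norming `T`
at which `A` does not decrease. -/
theorem exists_norming_re_mul_nonneg {𝕜 X Y : Type*} [RCLike 𝕜]
    [NormedAddCommGroup X] [NormedSpace 𝕜 X] [NormedAddCommGroup Y] [NormedSpace 𝕜 Y]
    (hrefl : Function.Surjective (NormedSpace.inclusionInDoubleDual 𝕜 X))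
    {T A : X →L[𝕜] Y} (hT : IsCompactOperator T) (hA : IsCompactOperator A)
    (h : ∀ lam : 𝕜, ‖T + lam • A‖ ≥ ‖T‖) (μ : 𝕜) :
    ∃ x ∈ closedBall (0 : X) 1, ∃ y ∈ closedBall (0 : Y →L[𝕜] 𝕜) 1,
      y (T x) = (‖T‖ : 𝕜) ∧ 0 ≤ RCLike.re (μ * y (A x)) := by
  let t : ℕ → ℝ := fun n => 1 / ((n : ℝ) + 1)
  have ht_pos (n : ℕ) : 0 < t n := Nat.one_div_pos_of_nat
  have ht : Tendsto t atTop (𝓝 0) := tendsto_one_div_add_atTop_nhds_zero_nat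
  have hchoice (n : ℕ) : ∃ x ∈ closedBall (0 : X) 1, ∃ y ∈ closedBall (0 : Y →L[𝕜] 𝕜) 1,
      ‖T‖ - t n * t n ≤ RCLike.re (y (T x)) + t n * RCLike.re (μ * y (A x)) := by
    obtain ⟨x, hx, hlt⟩ := (T + ((t n : 𝕜) * μ) • A).exists_lt_apply_of_lt_opNorm
      (r := ‖T‖ - t n * t n) (by nlinarith [h ((t n : 𝕜) * μ), ht_pos n])
    obtain ⟨y, hy, hyx⟩ := exists_dual_vector'' 𝕜 ((T + ((t n : 𝕜) * μ) • A) x)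
    refine ⟨x, by simpa using hx.le, y, by simpa using hy, ?_⟩
    have := congrArg RCLike.re hyx
    simp only [add_apply, smul_apply, map_add, map_smul,
      smul_eq_mul, mul_assoc, RCLike.re_ofReal_mul, RCLike.ofReal_re] at this hlt
    rw [this]
    simpa [mul_assoc] using hlt.le
  choose x hx y hy hxy using hchoice
  let l : Ultrafilter ℕ := Ultrafilter.of atTop
  have hl : (l : Filter ℕ) ≤ atTop := Ultrafilter.of_le _
  obtain ⟨a, ha, b, hb, hlim⟩ := exists_tendsto_apply_compactOperator_of_reflexive hrefl l hx hy
  have htl : Tendsto t l (𝓝 0) := ht.mono_left hl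
  have hTlim : Tendsto (fun n => RCLike.re (y n (T (x n)))) l (𝓝 (RCLike.re (b (T a)))) :=
    (RCLike.continuous_re.tendsto _).comp (hlim T hT)
  have hAlim : Tendsto (fun n => RCLike.re (μ * y n (A (x n)))) l (𝓝 (RCLike.re (μ * b (A a)))) :=
    (RCLike.continuous_re.tendsto _).comp ((hlim A hA).const_mul μ)
  refine ⟨a, ha, b, hb, eq_ofReal_of_norm_le_of_re_eq (norm_apply_apply_le_opNorm T ha hb)
    (le_antisymm ((RCLike.re_le_norm _).trans (norm_apply_apply_le_opNorm T ha hb)) ?_), ?_⟩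
  · have h₁ : Tendsto (fun n => ‖T‖ - t n * t n) l (𝓝 ‖T‖) := by
      simpa using (htl.mul htl).const_sub ‖T‖
    have h₂ := hTlim.add (htl.mul hAlim)
    rw [zero_mul, add_zero] at h₂
    exact le_of_tendsto_of_tendsto' h₁ h₂ hxy
  · have h₁ : Tendsto (fun n => -t n) l (𝓝 0) := by simpa using htl.neg
    refine le_of_tendsto_of_tendsto' h₁ hAlim fun n => ?_
    have := (RCLike.re_le_norm _).trans (norm_apply_apply_le_opNorm T (hx n) (hy n))
    have hmul : t n * -t n ≤ t n * RCLike.re (μ * y n (A (x n))) := by linarith [hxy n]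
    exact le_of_mul_le_mul_left hmul (ht_pos n)

/-- If `T` is Birkhoff-James orthogonal to `A`, then zero is a convex combination of values of `A`
at pairs norming `T`. -/
theorem zero_mem_convexHull_norming {𝕜 X Y : Type*} [RCLike 𝕜]
    [NormedAddCommGroup X] [NormedSpace 𝕜 X] [NormedAddCommGroup Y] [NormedSpace 𝕜 Y]
    (hrefl : Function.Surjective (NormedSpace.inclusionInDoubleDual 𝕜 X))
    {T A : X →L[𝕜] Y} (hT : IsCompactOperator T) (hA : IsCompactOperator A)
    (h : ∀ lam : 𝕜, ‖T + lam • A‖ ≥ ‖T‖) :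
    (0 : 𝕜) ∈ convexHull ℝ {α : 𝕜 | ∃ x ∈ closedBall (0 : X) 1,
      ∃ y ∈ closedBall (0 : Y →L[𝕜] 𝕜) 1, y (T x) = (‖T‖ : 𝕜) ∧ y (A x) = α} := by
  by_contra hzero
  obtain ⟨f, u, hu, hu0⟩ := RCLike.geometric_hahn_banach_closed_point (𝕜 := 𝕜)
    (convex_convexHull ℝ _)
    (isCompact_setOf_apply_of_norming hrefl hT hA (‖T‖ : 𝕜)).convexHull_of_finiteDimensional.isClosed
    hzero
  obtain ⟨x, hx, y, hy, hxy, hnonneg⟩ := exists_norming_re_mul_nonneg hrefl hT hA h (f 1)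
  have hlt := hu (y (A x)) (subset_convexHull ℝ _ ⟨x, hx, y, hy, hxy, rfl⟩)
  have hf : f (y (A x)) = f 1 * y (A x) := by
    rw [mul_comm, ← smul_eq_mul, ← map_smul, smul_eq_mul, mul_one]
  rw [map_zero, map_zero] at hu0
  rw [hf] at hlt
  linarith

/-- The value of `A` at a pair norming `T` is a convex combination of values of `A` at norming pairs
of extreme points. -/
theorem norming_subset_convexHull_extremePoints {𝕜 X Y : Type*} [RCLike 𝕜]
    [NormedAddCommGroup X] [NormedSpace 𝕜 X] [NormedSpace ℝ X] [IsScalarTower ℝ 𝕜 X]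
    [NormedAddCommGroup Y] [NormedSpace 𝕜 Y]
    (hrefl : Function.Surjective (NormedSpace.inclusionInDoubleDual 𝕜 X)) (T A : X →L[𝕜] Y) :
    {α : 𝕜 | ∃ x ∈ closedBall (0 : X) 1,
      ∃ y ∈ closedBall (0 : Y →L[𝕜] 𝕜) 1, y (T x) = (‖T‖ : 𝕜) ∧ y (A x) = α} ⊆
    convexHull ℝ {α : 𝕜 | ∃ x ∈ Set.extremePoints ℝ (closedBall (0 : X) 1),
      ∃ y ∈ Set.extremePoints ℝ (closedBall (0 : Y →L[𝕜] 𝕜) 1),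
      y (T x) = (‖T‖ : 𝕜) ∧ y (A x) = α} := by
  have hle {x : X} (hx : x ∈ closedBall (0 : X) 1) {y : Y →L[𝕜] 𝕜}
      (hy : y ∈ closedBall (0 : Y →L[𝕜] 𝕜) 1) : RCLike.re (y (T x)) ≤ ‖T‖ :=
    (RCLike.re_le_norm _).trans (norm_apply_apply_le_opNorm T hx hy)
  rintro _ ⟨x, hx, y, hy, hxy, rfl⟩
  refine convexHull_min ?_ (convex_convexHull ℝ _)
    (apply_mem_convexHull_extremePoints_of_reflexive hrefl (y.comp T) (y.comp A)
      (fun z hz => hle hz hy) hx (by simp [hxy]))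
  rintro _ ⟨x', hx', hxy', rfl⟩
  refine convexHull_mono ?_
    (apply_mem_convexHull_extremePoints_dual (T x') (A x') (fun z hz => hle hx'.1 hz) hy hxy')
  rintro _ ⟨y', hy', hxy'', rfl⟩
  exact ⟨x', hx', y', hy', eq_ofReal_of_norm_le_of_re_eq
    (norm_apply_apply_le_opNorm T hx'.1 hy'.1) hxy'', rfl⟩

/-- Birkhoff-James orthogonality of compact operators from a reflexive space, characterized via
extreme points of `B_X` and of the dual unit ball of `Y`. -/
theorem BJ_orthogonality_compact_operators_reflexive {𝕜 X Y : Type*} [RCLike 𝕜]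
    [NormedAddCommGroup X] [NormedSpace 𝕜 X] [CompleteSpace X]
    [NormedSpace ℝ X] [IsScalarTower ℝ 𝕜 X]
    [NormedAddCommGroup Y] [NormedSpace 𝕜 Y] [CompleteSpace Y]
    (hrefl : Function.Surjective (NormedSpace.inclusionInDoubleDual 𝕜 X))
    (T A : X →L[𝕜] Y) (hT : IsCompactOperator T) (hA : IsCompactOperator A) :
    (∀ lam : 𝕜, ‖T + lam • A‖ ≥ ‖T‖) ↔
      (0 : 𝕜) ∈ convexHull ℝ {α : 𝕜 |
        ∃ x ∈ Set.extremePoints ℝ (Metric.closedBall (0 : X) 1),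
        ∃ y ∈ Set.extremePoints ℝ (Metric.closedBall (0 : Y →L[𝕜] 𝕜) 1),
        y (T x) = (‖T‖ : 𝕜) ∧ y (A x) = α} := by
  refine ⟨fun h => convexHull_min (norming_subset_convexHull_extremePoints hrefl T A)
    (convex_convexHull ℝ _) (zero_mem_convexHull_norming hrefl hT hA h), fun h lam => ?_⟩
  by_contra! hlt
  have hconv : Convex ℝ {α : 𝕜 | RCLike.re (lam * α) < 0} :=
    convex_halfSpace_lt (f := fun α : 𝕜 => RCLike.re (lam * α))
      ⟨fun a b => by simp [mul_add], fun r a => by simp [RCLike.smul_re]⟩ 0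
  have hneg := convexHull_min ?_ hconv h
  · simp at hneg
  rintro _ ⟨x, hx, y, hy, hxy, rfl⟩
  have := (RCLike.re_le_norm _).trans (norm_apply_apply_le_opNorm (T + lam • A) hx.1 hy.1)
  simp only [add_apply, smul_apply, map_add, map_smul,
    smul_eq_mul, hxy, RCLike.ofReal_re] at this
  change RCLike.re (lam * y (A x)) < 0
  linarith
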